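/- There exist absolute constants C1, C2 > 0 such that for every finite irreducible reversible Markov chain (Ω,P,π), every probability measure μ on Ω, every 0 < α ≤ 1/2 and every real t ≥ 1: d_ave(φ_{α,C1}(t), μ) ≤ d_L(2t, μ) + C2 · t^{−α}. Moreover the same inequality holds with the worst-case distances d_ave(φ_{α,C1}(t)) and d_L(2t) in place of the μ-versions. -/

import Mathlib

open Matrix Filter Asymptotics

/-- `P` is a stochastic matrix. -/
def IsStochastic {Ω : Type*} [Fintype Ω] (P : Matrix Ω Ω ℝ) : Prop :=
  (∀ x y, 0 ≤ P x y) ∧ ∀ x, ∑ y, P x y = 1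

/-- `P` is irreducible. -/
def IsIrreducibleMatrix {Ω : Type*} [Fintype Ω] [DecidableEq Ω] (P : Matrix Ω Ω ℝ) : Prop :=
  ∀ x y, ∃ n : ℕ, 0 < (P ^ n) x y

/-- `μ` is a probability vector. -/
def IsProbVec {Ω : Type*} [Fintype Ω] (μ : Ω → ℝ) : Prop :=
  (∀ x, 0 ≤ μ x) ∧ ∑ x, μ x = 1

/-- The chain `(P, pi)` is reversible. -/
def IsReversible {Ω : Type*} [Fintype Ω] (P : Matrix Ω Ω ℝ) (pi : Ω → ℝ) : Prop :=
  ∀ x y, pi x * P x y = pi y * P y x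

/-- A finite irreducible Markov chain `P` with stationary distribution `pi`. -/
def IsMC {Ω : Type*} [Fintype Ω] [DecidableEq Ω] (P : Matrix Ω Ω ℝ) (pi : Ω → ℝ) : Prop :=
  IsStochastic P ∧ IsIrreducibleMatrix P ∧ IsProbVec pi ∧ pi ᵥ* P = pi

/-- A finite irreducible reversible Markov chain `P` with stationary distribution `pi`. -/
def IsRevMC {Ω : Type*} [Fintype Ω] [DecidableEq Ω] (P : Matrix Ω Ω ℝ) (pi : Ω → ℝ) : Prop :=
  IsMC P pi ∧ IsReversible P pi

/-- Total-variation distance between two measures on a finite set. -/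
noncomputable def tvDist {Ω : Type*} [Fintype Ω] (μ ν : Ω → ℝ) : ℝ :=
  (∑ x, |μ x - ν x|) / 2

/-- The lazy version `(I + P)/2` of `P`. -/
noncomputable def lazyM {Ω : Type*} [Fintype Ω] [DecidableEq Ω] (P : Matrix Ω Ω ℝ) :
    Matrix Ω Ω ℝ :=
  (2 : ℝ)⁻¹ • (1 + P)

/-- `d_c(t, μ)`: TV distance from stationarity of the continuous-time chain at time `t`,
started from `μ`. -/
noncomputable def contDist {Ω : Type*} [Fintype Ω] [DecidableEq Ω] (P : Matrix Ω Ω ℝ) (pi : Ω → ℝ)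
    (t : ℝ) (μ : Ω → ℝ) : ℝ :=
  tvDist (fun y => ∑' k : ℕ, Real.exp (-t) * t ^ k / (Nat.factorial k) * (μ ᵥ* (P ^ k)) y) pi

/-- `d_L(t, μ)`: TV distance from stationarity of the lazy chain at (discrete) time `t`,
started from `μ`. -/
noncomputable def lazyDist {Ω : Type*} [Fintype Ω] [DecidableEq Ω] (P : Matrix Ω Ω ℝ)
    (pi : Ω → ℝ) (t : ℝ) (μ : Ω → ℝ) : ℝ :=
  tvDist (μ ᵥ* (lazyM P ^ ⌊t⌋₊)) pi

/-- `d_ave(t, μ)`: TV distance from stationarity of the averaged chain at (discrete) time `t`,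
started from `μ`. -/
noncomputable def aveDist {Ω : Type*} [Fintype Ω] [DecidableEq Ω] (P : Matrix Ω Ω ℝ) (pi : Ω → ℝ)
    (t : ℝ) (μ : Ω → ℝ) : ℝ :=
  tvDist (fun y => ((μ ᵥ* (P ^ ⌊t⌋₊)) y + (μ ᵥ* (P ^ (⌊t⌋₊ + 1))) y) / 2) pi

/-- The point mass at `x`. -/
noncomputable def deltaMass {Ω : Type*} [DecidableEq Ω] (x : Ω) : Ω → ℝ :=
  fun y => if y = x then 1 else 0

/-- Worst-case continuous-time distance `d_c(t)`. -/
noncomputable def contDistMax {Ω : Type*} [Fintype Ω] [DecidableEq Ω] (P : Matrix Ω Ω ℝ)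
    (pi : Ω → ℝ) (t : ℝ) : ℝ :=
  ⨆ x : Ω, contDist P pi t (deltaMass x)

/-- Worst-case lazy distance `d_L(t)`. -/
noncomputable def lazyDistMax {Ω : Type*} [Fintype Ω] [DecidableEq Ω] (P : Matrix Ω Ω ℝ)
    (pi : Ω → ℝ) (t : ℝ) : ℝ :=
  ⨆ x : Ω, lazyDist P pi t (deltaMass x)

/-- Worst-case averaged distance `d_ave(t)`. -/
noncomputable def aveDistMax {Ω : Type*} [Fintype Ω] [DecidableEq Ω] (P : Matrix Ω Ω ℝ)
    (pi : Ω → ℝ) (t : ℝ) : ℝ :=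
  ⨆ x : Ω, aveDist P pi t (deltaMass x)

/-- `φ_{α,C}(t) = t + ⌈C t^{(1+2α)/2} √(α log t)⌉`. -/
noncomputable def phiAC (α C t : ℝ) : ℝ :=
  t + ((⌈C * t ^ ((1 + 2 * α) / 2) * Real.sqrt (α * Real.log t)⌉ : ℤ) : ℝ)

/-- `ψ_{α,C}(x) = min (1, x + C |log(2x)|^{-α})`. -/
noncomputable def psiAC (α C x : ℝ) : ℝ :=
  min 1 (x + C * |Real.log (2 * x)| ^ (-α))

/-- `t_c(ε)`, the `ε`-mixing time of the continuous-time chain. -/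
noncomputable def contMix {Ω : Type*} [Fintype Ω] [DecidableEq Ω] (P : Matrix Ω Ω ℝ)
    (pi : Ω → ℝ) (ε : ℝ) : ℝ :=
  sInf {t : ℝ | 0 ≤ t ∧ contDistMax P pi t ≤ ε}

/-- `t_L(ε)`, the `ε`-mixing time of the lazy chain. -/
noncomputable def lazyMix {Ω : Type*} [Fintype Ω] [DecidableEq Ω] (P : Matrix Ω Ω ℝ)
    (pi : Ω → ℝ) (ε : ℝ) : ℕ :=
  sInf {t : ℕ | lazyDistMax P pi t ≤ ε}

/-- `t_ave(ε)`, the `ε`-mixing time of the averaged chain. -/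
noncomputable def aveMix {Ω : Type*} [Fintype Ω] [DecidableEq Ω] (P : Matrix Ω Ω ℝ)
    (pi : Ω → ℝ) (ε : ℝ) : ℕ :=
  sInf {t : ℕ | aveDistMax P pi t ≤ ε}

/-! The averaged chain at time `k` has kernel `P ^ k * lazyM P`, so for a test function
`0 ≤ f ≤ 1` consecutive averages `(P ^ k * lazyM P) *ᵥ f` differ by half of
`(P ^ (k + 2) - P ^ k) *ᵥ f`.
By reversibility the `L²(pi)` norm squared of this difference is a second difference of
`k ↦ ‖P ^ k *ᵥ f‖²`; this second difference is antitone in `k`, hence `O(1 / k²)`. Thus the maximum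
of the averages over a time window `[a, a + w]` has `pi`-mean at most `pi ⬝ᵥ f + w / (a + 1)`.

The lazy chain at time `n` is the original chain at an independent binomial time `j`. By Hoeffding
`j` lies within `J` of `n / 2` up to probability `2 exp (-2 J² / n)`, and then the time `s - j` that
is left until `s` lies in a window of length `2 J`. Applying the window maximum to the lazy chain at
time `n` therefore dominates the average at time `s`. For `n = 2 t`, `s = t + 3 J t ^ α` and
`J² = α t log t` the window starts after time `2 J t ^ α`, so both errors are `O(t ^ (-α))`. -/

open Finset

section SecondDifference

theorem succ_mul_secondDiff_le {m : ℕ → ℝ} (hm_nonneg : ∀ k, 0 ≤ m k) (hm : Antitone m)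
    (hD : Antitone fun k => m k - 2 * m (k + 1) + m (k + 2)) (k : ℕ) :
    ((k : ℝ) + 1) * (k + 2) * (m k - 2 * m (k + 1) + m (k + 2)) ≤ 2 * m 0 := by
  -- The right-hand side is `∑ j ≤ k, (j + 1) D j`, where `D` is the second difference of `m`.
  have summed : ∀ k : ℕ, ((k : ℝ) + 1) * (k + 2) / 2 * (m k - 2 * m (k + 1) + m (k + 2))
      ≤ m 0 - m (k + 1) - (k + 1) * (m (k + 1) - m (k + 2)) := by
    intro k
    induction k with
    | zero => norm_num; linarith
    | succ k ih =>
      have step := mul_le_mul_of_nonneg_left (hD k.le_succ)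
        (by positivity : (0 : ℝ) ≤ ((k : ℝ) + 1) * (k + 2) / 2)
      push_cast at step ⊢
      linarith
  have decrement_nonneg : 0 ≤ ((k : ℝ) + 1) * (m (k + 1) - m (k + 2)) :=
    mul_nonneg (by positivity) (sub_nonneg.2 (hm (k + 1).le_succ))
  linarith [summed k, hm_nonneg (k + 1)]

end SecondDifference

section Binomial

/-- The mass function of the binomial distribution with parameters `n` and `1 / 2`. -/
noncomputable def halfBinomial (n j : ℕ) : ℝ :=
  n.choose j / 2 ^ n

theorem halfBinomial_nonneg (n j : ℕ) : 0 ≤ halfBinomial n j := by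
  unfold halfBinomial
  positivity

theorem sum_halfBinomial (n : ℕ) : ∑ j ∈ range (n + 1), halfBinomial n j = 1 := by
  simp only [halfBinomial]
  rw [← sum_div, ← Nat.cast_sum, Nat.sum_range_choose, Nat.cast_pow, Nat.cast_ofNat,
    div_self (by positivity)]

/-- The probability that a binomial variable with parameters `n` and `1 / 2` deviates from its mean
`n / 2` by more than `J`. -/
noncomputable def halfBinomialTail (n : ℕ) (J : ℝ) : ℝ :=
  ∑ j ∈ range (n + 1) with J < |((j : ℕ) : ℝ) - n / 2|, halfBinomial n j

theorem sum_halfBinomial_mul_exp (n : ℕ) (l : ℝ) :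
    ∑ j ∈ range (n + 1), halfBinomial n j * Real.exp (l * (j - n / 2)) =
      Real.cosh (l / 2) ^ n := by
  rw [Real.cosh_eq, div_pow, add_pow, sum_div]
  refine sum_congr rfl fun j hj => ?_
  have exponents : l * ((j : ℝ) - n / 2) = j * (l / 2) + (n - j : ℕ) * -(l / 2) := by
    rw [Nat.cast_sub (mem_range_succ_iff.1 hj)]
    ring
  rw [exponents, Real.exp_add, Real.exp_nat_mul, Real.exp_nat_mul, halfBinomial]
  ring

theorem sum_halfBinomial_mul_exp_le (n : ℕ) (l : ℝ) :
    ∑ j ∈ range (n + 1), halfBinomial n j * Real.exp (l * (j - n / 2)) ≤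
      Real.exp (n * l ^ 2 / 8) := by
  calc ∑ j ∈ range (n + 1), halfBinomial n j * Real.exp (l * (j - n / 2))
      = Real.cosh (l / 2) ^ n := sum_halfBinomial_mul_exp n l
    _ ≤ Real.exp ((l / 2) ^ 2 / 2) ^ n :=
        pow_le_pow_left₀ (Real.cosh_pos _).le (Real.cosh_le_exp_half_sq _) n
    _ = Real.exp (n * l ^ 2 / 8) := by
        rw [← Real.exp_nat_mul]
        ring_nf

theorem halfBinomialTail_le_exp_of_nonneg (n : ℕ) (J : ℝ) {l : ℝ} (hl : 0 ≤ l) :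
    halfBinomialTail n J ≤ 2 * Real.exp (n * l ^ 2 / 8 - l * J) := by
  have markov : ∀ j : ℕ, J < |(j : ℝ) - n / 2| →
      1 ≤ Real.exp (-(l * J)) *
        (Real.exp (l * (j - n / 2)) + Real.exp (-l * (j - n / 2))) := fun j hj =>
    calc (1 : ℝ) ≤ Real.exp (-(l * J) + |l * (j - n / 2)|) := by
          rw [Real.one_le_exp_iff, abs_mul, abs_of_nonneg hl, neg_add_eq_sub, sub_nonneg]
          exact mul_le_mul_of_nonneg_left hj.le hl
      _ ≤ _ := by
          rw [Real.exp_add, neg_mul]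
          gcongr
          exact Real.exp_abs_le _
  calc halfBinomialTail n J
      ≤ ∑ j ∈ range (n + 1) with J < |((j : ℕ) : ℝ) - n / 2|, halfBinomial n j *
          (Real.exp (-(l * J)) *
            (Real.exp (l * (j - n / 2)) + Real.exp (-l * (j - n / 2)))) :=
        sum_le_sum fun j hj =>
          le_mul_of_one_le_right (halfBinomial_nonneg n j) (markov j (mem_filter.1 hj).2)
    _ ≤ ∑ j ∈ range (n + 1), halfBinomial n j *
          (Real.exp (-(l * J)) *
            (Real.exp (l * (j - n / 2)) + Real.exp (-l * (j - n / 2)))) :=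
        sum_le_sum_of_subset_of_nonneg (filter_subset _ _) fun j _ _ =>
          mul_nonneg (halfBinomial_nonneg n j) (by positivity)
    _ = Real.exp (-(l * J)) *
          (∑ j ∈ range (n + 1), halfBinomial n j * Real.exp (l * (j - n / 2)) +
            ∑ j ∈ range (n + 1), halfBinomial n j * Real.exp (-l * (j - n / 2))) := by
        rw [← sum_add_distrib, mul_sum]
        exact sum_congr rfl fun j _ => by ring
    _ ≤ Real.exp (-(l * J)) *
          (Real.exp (n * l ^ 2 / 8) + Real.exp (n * (-l) ^ 2 / 8)) := by
        gcongr <;> exact sum_halfBinomial_mul_exp_le n _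
    _ = 2 * Real.exp (n * l ^ 2 / 8 - l * J) := by
        rw [neg_sq, ← two_mul, mul_left_comm, ← Real.exp_add, neg_add_eq_sub]

theorem halfBinomialTail_le_exp (n : ℕ) {J : ℝ} (hJ : 0 ≤ J) :
    halfBinomialTail n J ≤ 2 * Real.exp (-(2 * J ^ 2 / n)) := by
  refine (halfBinomialTail_le_exp_of_nonneg n J (l := 4 * J / n) (by positivity)).trans_eq ?_
  rcases n.eq_zero_or_pos with rfl | hn
  · simp
  · congr 2
    field_simp
    ring

end Binomial

section ProbabilityVector

variable {Ω : Type*} [Fintype Ω] {μ ν f : Ω → ℝ}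

namespace IsProbVec

theorem nonempty (hμ : IsProbVec μ) : Nonempty Ω := by
  by_contra hΩ
  rw [not_nonempty_iff] at hΩ
  simpa using hμ.2

theorem sum_eq_sum (hμ : IsProbVec μ) (hν : IsProbVec ν) : ∑ x, μ x = ∑ x, ν x :=
  hμ.2.trans hν.2.symm

theorem dotProduct_mem_Icc (hμ : IsProbVec μ) (hf : f ∈ Set.Icc 0 1) :
    μ ⬝ᵥ f ∈ Set.Icc 0 1 := by
  refine ⟨dotProduct_nonneg_of_nonneg hμ.1 hf.1, ?_⟩
  calc μ ⬝ᵥ f ≤ μ ⬝ᵥ 1 := dotProduct_le_dotProduct_of_nonneg_left hf.2 hμ.1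
    _ = 1 := (dotProduct_one μ).trans hμ.2

theorem sq_dotProduct_le (hμ : IsProbVec μ) (f : Ω → ℝ) : (μ ⬝ᵥ f) ^ 2 ≤ μ ⬝ᵥ f ^ 2 :=
  Real.pow_arith_mean_le_arith_mean_pow_of_even univ μ f (fun x _ => hμ.1 x) hμ.2 even_two

end IsProbVec

theorem isProbVec_deltaMass [DecidableEq Ω] (x : Ω) : IsProbVec (deltaMass x) := by
  refine ⟨fun y => ?_, by simp [deltaMass]⟩
  unfold deltaMass
  positivity

theorem tvDist_nonneg (μ ν : Ω → ℝ) : 0 ≤ tvDist μ ν := by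
  unfold tvDist
  positivity

theorem dotProduct_le_dotProduct_add_tvDist (hmass : ∑ x, μ x = ∑ x, ν x)
    (hf : f ∈ Set.Icc 0 1) : μ ⬝ᵥ f ≤ ν ⬝ᵥ f + tvDist μ ν := by
  -- Centring `f` at `1 / 2` costs nothing, since the masses agree, and gains the factor `1 / 2`.
  have centred : μ ⬝ᵥ f - ν ⬝ᵥ f = ∑ x, (μ x - ν x) * (f x - 1 / 2) := by
    simp only [mul_sub, sub_mul, sum_sub_distrib, ← sum_mul, hmass, sub_self, sub_zero]
    rfl
  have pointwise : ∀ x, (μ x - ν x) * (f x - 1 / 2) ≤ |μ x - ν x| * (1 / 2) := fun x => by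
    refine (le_abs_self _).trans ?_
    rw [abs_mul]
    gcongr
    rw [abs_le]
    constructor <;> linarith [hf.1 x, hf.2 x, Pi.zero_apply (M := fun _ => ℝ) x,
      Pi.one_apply (M := fun _ => ℝ) x]
  have summed := sum_le_sum fun x (_ : x ∈ univ) => pointwise x
  rw [← centred, ← sum_mul] at summed
  unfold tvDist
  linarith

theorem tvDist_le_of_forall_dotProduct_le (hmass : ∑ x, μ x = ∑ x, ν x) {ε : ℝ}
    (h : ∀ f ∈ Set.Icc (0 : Ω → ℝ) 1, μ ⬝ᵥ f ≤ ν ⬝ᵥ f + ε) : tvDist μ ν ≤ ε := by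
  set f : Ω → ℝ := fun x => if ν x ≤ μ x then 1 else 0 with hf
  have abs_eq : ∀ x, |μ x - ν x| = 2 * (μ x * f x - ν x * f x) - (μ x - ν x) := fun x => by
    simp only [hf]
    split_ifs with hx
    · rw [abs_of_nonneg (sub_nonneg.2 hx)]; ring
    · rw [abs_of_neg (sub_neg.2 (not_le.1 hx))]; ring
  have tv_eq : tvDist μ ν = μ ⬝ᵥ f - ν ⬝ᵥ f := by
    simp only [tvDist, abs_eq, sum_sub_distrib, ← mul_sum, hmass, sub_self, sub_zero, dotProduct]
    ring
  have hf_mem : f ∈ Set.Icc 0 1 :=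
    ⟨fun x => by simp only [hf]; split_ifs <;> simp, fun x => by simp only [hf]; split_ifs <;> simp⟩
  linarith [h f hf_mem]

theorem tvDist_le_one (hμ : IsProbVec μ) (hν : IsProbVec ν) : tvDist μ ν ≤ 1 :=
  tvDist_le_of_forall_dotProduct_le (hμ.sum_eq_sum hν) fun f hf => by
    linarith [(hμ.dotProduct_mem_Icc hf).2, (hν.dotProduct_mem_Icc hf).1]

end ProbabilityVector

section WindowMax

variable {Ω : Type*} {F : ℕ → Ω → ℝ}

/-- The maximal function `max_{a ≤ k ≤ a + w} F k` of a sequence of functions over a time window.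
The window is given by its length `w`, so that it is never empty. -/
noncomputable def windowMax (F : ℕ → Ω → ℝ) (a w : ℕ) : Ω → ℝ :=
  (Icc a (a + w)).sup' (nonempty_Icc.2 (Nat.le_add_right a w)) F

theorem le_windowMax {a w k : ℕ} (hk : k ∈ Icc a (a + w)) : F k ≤ windowMax F a w :=
  le_sup' F hk

theorem windowMax_mem_Icc (hF : ∀ k, F k ∈ Set.Icc 0 1) (a w : ℕ) :
    windowMax F a w ∈ Set.Icc 0 1 :=
  ⟨(hF a).1.trans (le_windowMax (left_mem_Icc.2 (Nat.le_add_right a w))),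
    sup'_le _ _ fun k _ => (hF k).2⟩

theorem windowMax_le_add_sum_abs (F : ℕ → Ω → ℝ) (a w : ℕ) :
    windowMax F a w ≤ F a + ∑ k ∈ Ico a (a + w), |F (k + 1) - F k| := by
  refine sup'_le _ _ fun k hk x => ?_
  obtain ⟨hak, hkw⟩ := mem_Icc.1 hk
  have telescope : |F k x - F a x| ≤ ∑ i ∈ Ico a (a + w), |F (i + 1) x - F i x| := by
    calc |F k x - F a x| ≤ ∑ i ∈ Ico a k, |F i x - F (i + 1) x| := by
          rw [abs_sub_comm]
          exact dist_le_Ico_sum_dist (F · x) hak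
      _ ≤ ∑ i ∈ Ico a (a + w), |F i x - F (i + 1) x| :=
          sum_le_sum_of_subset_of_nonneg (Ico_subset_Ico_right hkw) fun _ _ _ => abs_nonneg _
      _ = ∑ i ∈ Ico a (a + w), |F (i + 1) x - F i x| :=
          sum_congr rfl fun _ _ => abs_sub_comm _ _
  rw [Pi.add_apply, Finset.sum_apply]
  change F k x ≤ F a x + ∑ i ∈ Ico a (a + w), |F (i + 1) x - F i x|
  linarith [le_abs_self (F k x - F a x)]

theorem dotProduct_windowMax_le [Fintype Ω] {μ : Ω → ℝ} (hμ : 0 ≤ μ) (F : ℕ → Ω → ℝ) (a w : ℕ) :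
    μ ⬝ᵥ windowMax F a w ≤ μ ⬝ᵥ F a + ∑ k ∈ Ico a (a + w), μ ⬝ᵥ |F (k + 1) - F k| := by
  rw [← dotProduct_sum, ← dotProduct_add]
  exact dotProduct_le_dotProduct_of_nonneg_left (windowMax_le_add_sum_abs F a w) hμ

end WindowMax

section StochasticMatrix

variable {Ω : Type*} [Fintype Ω] {P Q : Matrix Ω Ω ℝ} {μ pi f : Ω → ℝ}

theorem isStochastic_iff_mem_rowStochastic [DecidableEq Ω] :
    IsStochastic P ↔ P ∈ rowStochastic ℝ Ω :=
  mem_rowStochastic_iff_sum.symm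

namespace IsStochastic

theorem isProbVec_row (hP : IsStochastic P) (x : Ω) : IsProbVec (P x) :=
  ⟨hP.1 x, hP.2 x⟩

theorem mulVec_mem_Icc (hP : IsStochastic P) (hf : f ∈ Set.Icc 0 1) : P *ᵥ f ∈ Set.Icc 0 1 :=
  ⟨fun x => ((hP.isProbVec_row x).dotProduct_mem_Icc hf).1,
    fun x => ((hP.isProbVec_row x).dotProduct_mem_Icc hf).2⟩

theorem sq_mulVec_le (hP : IsStochastic P) (f : Ω → ℝ) : (P *ᵥ f) ^ 2 ≤ P *ᵥ f ^ 2 :=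
  fun x => (hP.isProbVec_row x).sq_dotProduct_le f

theorem dotProduct_sq_mulVec_le (hP : IsStochastic P) (hpi : 0 ≤ pi) (hstat : pi ᵥ* P = pi)
    (f : Ω → ℝ) : pi ⬝ᵥ (P *ᵥ f) ^ 2 ≤ pi ⬝ᵥ f ^ 2 := by
  calc pi ⬝ᵥ (P *ᵥ f) ^ 2 ≤ pi ⬝ᵥ (P *ᵥ f ^ 2) :=
        dotProduct_le_dotProduct_of_nonneg_left (hP.sq_mulVec_le f) hpi
    _ = pi ⬝ᵥ f ^ 2 := by rw [dotProduct_mulVec, hstat]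

theorem mul (hP : IsStochastic P) (hQ : IsStochastic Q) : IsStochastic (P * Q) := by
  classical
  rw [isStochastic_iff_mem_rowStochastic] at *
  exact mul_mem hP hQ

variable [DecidableEq Ω]

theorem pow (hP : IsStochastic P) (k : ℕ) : IsStochastic (P ^ k) := by
  rw [isStochastic_iff_mem_rowStochastic] at *
  exact pow_mem hP k

theorem lazyM (hP : IsStochastic P) : IsStochastic (lazyM P) := by
  rw [isStochastic_iff_mem_rowStochastic] at *
  rw [_root_.lazyM, smul_add]
  exact convex_rowStochastic (one_mem _) hP (by norm_num) (by norm_num) (by norm_num)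

end IsStochastic

theorem IsProbVec.vecMul (hμ : IsProbVec μ) (hP : IsStochastic P) : IsProbVec (μ ᵥ* P) := by
  classical
  rw [isStochastic_iff_mem_rowStochastic] at hP
  refine ⟨nonneg_vecMul_of_mem_rowStochastic hP hμ.1, ?_⟩
  rw [← dotProduct_one]
  exact vecMul_dotProduct_one_eq_one_rowStochastic hP ((dotProduct_one μ).trans hμ.2)

end StochasticMatrix

section LazyChain

variable {Ω : Type*} [Fintype Ω] [DecidableEq Ω] {P : Matrix Ω Ω ℝ} {μ pi f : Ω → ℝ}

theorem vecMul_pow_eq_self (hstat : pi ᵥ* P = pi) (k : ℕ) : pi ᵥ* P ^ k = pi := by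
  induction k with
  | zero => rw [pow_zero, vecMul_one]
  | succ k ih => rw [pow_succ, ← vecMul_vecMul, ih, hstat]

theorem vecMul_lazyM_eq_self (hstat : pi ᵥ* P = pi) : pi ᵥ* lazyM P = pi := by
  rw [lazyM, vecMul_smul, vecMul_add, vecMul_one, hstat, ← two_smul ℝ pi, smul_smul]
  norm_num

theorem lazyM_pow (P : Matrix Ω Ω ℝ) (n : ℕ) :
    lazyM P ^ n = ∑ j ∈ range (n + 1), halfBinomial n j • P ^ j := by
  rw [lazyM, smul_pow, add_comm, (Commute.one_right P).add_pow, smul_sum]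
  refine sum_congr rfl fun j _ => ?_
  rw [one_pow, mul_one, ← Nat.cast_comm, ← nsmul_eq_mul, ← Nat.cast_smul_eq_nsmul ℝ, smul_smul,
    inv_pow, inv_mul_eq_div, halfBinomial]

theorem dotProduct_lazyM_pow (P : Matrix Ω Ω ℝ) (μ f : Ω → ℝ) (n : ℕ) :
    (μ ᵥ* lazyM P ^ n) ⬝ᵥ f = ∑ j ∈ range (n + 1), halfBinomial n j * ((μ ᵥ* P ^ j) ⬝ᵥ f) := by
  rw [← dotProduct_mulVec, lazyM_pow, sum_mulVec, dotProduct_sum]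
  refine sum_congr rfl fun j _ => ?_
  rw [smul_mulVec, dotProduct_smul, smul_eq_mul, dotProduct_mulVec]

theorem le_dotProduct_lazyM_pow_add (hP : IsStochastic P) (hμ : IsProbVec μ) (hf : 0 ≤ f)
    {c : ℝ} (hc : c ≤ 1) (n : ℕ) {J : ℝ} (hJ : 0 ≤ J)
    (h : ∀ j : ℕ, |(j : ℝ) - n / 2| ≤ J → c ≤ (μ ᵥ* P ^ j) ⬝ᵥ f) :
    c ≤ (μ ᵥ* lazyM P ^ n) ⬝ᵥ f + 2 * Real.exp (-(2 * J ^ 2 / n)) := by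
  have bound : ∀ j : ℕ, c ≤ (μ ᵥ* P ^ j) ⬝ᵥ f + if J < |(j : ℝ) - n / 2| then 1 else 0 := by
    intro j
    split_ifs with hj
    · linarith [dotProduct_nonneg_of_nonneg (hμ.vecMul (hP.pow j)).1 hf]
    · linarith [h j (not_lt.1 hj)]
  calc c = ∑ j ∈ range (n + 1), halfBinomial n j * c := by
        rw [← sum_mul, sum_halfBinomial, one_mul]
    _ ≤ ∑ j ∈ range (n + 1), halfBinomial n j *
          ((μ ᵥ* P ^ j) ⬝ᵥ f + if J < |(j : ℝ) - n / 2| then 1 else 0) :=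
        sum_le_sum fun j _ => mul_le_mul_of_nonneg_left (bound j) (halfBinomial_nonneg n j)
    _ = (μ ᵥ* lazyM P ^ n) ⬝ᵥ f + halfBinomialTail n J := by
        simp only [mul_add, sum_add_distrib, ← dotProduct_lazyM_pow, mul_ite, mul_one, mul_zero,
          sum_filter, halfBinomialTail]
    _ ≤ (μ ᵥ* lazyM P ^ n) ⬝ᵥ f + 2 * Real.exp (-(2 * J ^ 2 / n)) := by
        gcongr
        exact halfBinomialTail_le_exp n hJ

theorem aveDist_eq_tvDist_pow_mul_lazyM (P : Matrix Ω Ω ℝ) (pi : Ω → ℝ) (t : ℝ) (μ : Ω → ℝ) :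
    aveDist P pi t μ = tvDist (μ ᵥ* (P ^ ⌊t⌋₊ * lazyM P)) pi := by
  unfold aveDist
  congr 1
  ext y
  rw [lazyM, Matrix.mul_smul, mul_add, mul_one, ← pow_succ, vecMul_smul, vecMul_add, Pi.smul_apply,
    Pi.add_apply, smul_eq_mul, inv_mul_eq_div]

end LazyChain

section ReversibleChain

variable {Ω : Type*} [Fintype Ω] {P : Matrix Ω Ω ℝ} {μ pi f : Ω → ℝ}

namespace IsReversible

theorem vecMul_eq_self (hrev : IsReversible P pi) (hP : IsStochastic P) : pi ᵥ* P = pi := by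
  ext y
  calc ∑ x, pi x * P x y = ∑ x, pi y * P y x := sum_congr rfl fun x _ => hrev x y
    _ = pi y := by rw [← mul_sum, hP.2 y, mul_one]

theorem dotProduct_mulVec_mul (hrev : IsReversible P pi) (f g : Ω → ℝ) :
    pi ⬝ᵥ (P *ᵥ f * g) = pi ⬝ᵥ (f * P *ᵥ g) := by
  simp only [dotProduct, mulVec, Pi.mul_apply, mul_sum, sum_mul]
  rw [sum_comm]
  refine sum_congr rfl fun y _ => sum_congr rfl fun x _ => ?_
  linear_combination f y * g x * hrev x y

variable [DecidableEq Ω]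

theorem dotProduct_sq_sub_eq_secondDiff (hrev : IsReversible P pi) (f : Ω → ℝ) (k : ℕ) :
    pi ⬝ᵥ (P ^ (k + 2) *ᵥ f - P ^ k *ᵥ f) ^ 2 =
      pi ⬝ᵥ (P ^ k *ᵥ f) ^ 2 - 2 * pi ⬝ᵥ (P ^ (k + 1) *ᵥ f) ^ 2 +
        pi ⬝ᵥ (P ^ (k + 2) *ᵥ f) ^ 2 := by
  have selfAdjoint : pi ⬝ᵥ (P ^ (k + 1) *ᵥ f) ^ 2 = pi ⬝ᵥ (P ^ k *ᵥ f * P ^ (k + 2) *ᵥ f) := by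
    rw [sq, pow_succ' P (k + 1), ← mulVec_mulVec, ← hrev.dotProduct_mulVec_mul, mulVec_mulVec,
      ← pow_succ']
  rw [selfAdjoint, ← smul_eq_mul 2, ← dotProduct_smul, ← dotProduct_sub, ← dotProduct_add]
  congr 1
  rw [ofNat_smul_eq_nsmul, nsmul_eq_mul]
  ring

theorem succ_mul_dotProduct_sq_sub_le (hrev : IsReversible P pi) (hP : IsStochastic P)
    (hpi : 0 ≤ pi) (f : Ω → ℝ) (k : ℕ) :
    ((k : ℝ) + 1) * (k + 2) * pi ⬝ᵥ (P ^ (k + 2) *ᵥ f - P ^ k *ᵥ f) ^ 2 ≤ 2 * pi ⬝ᵥ f ^ 2 := by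
  have contraction := hP.dotProduct_sq_mulVec_le hpi (hrev.vecMul_eq_self hP)
  have mulVec_pow_succ : ∀ k, P ^ (k + 1) *ᵥ f = P *ᵥ (P ^ k *ᵥ f) := fun k => by
    rw [mulVec_mulVec, pow_succ']
  have norms_antitone : Antitone fun k => pi ⬝ᵥ (P ^ k *ᵥ f) ^ 2 :=
    antitone_nat_of_succ_le fun k => by
      rw [mulVec_pow_succ]
      exact contraction _
  have secondDiff_antitone : Antitone fun k => pi ⬝ᵥ (P ^ (k + 2) *ᵥ f - P ^ k *ᵥ f) ^ 2 :=
    antitone_nat_of_succ_le fun k => by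
      rw [mulVec_pow_succ (k + 2), mulVec_pow_succ k, ← mulVec_sub]
      exact contraction _
  simp only [hrev.dotProduct_sq_sub_eq_secondDiff] at secondDiff_antitone ⊢
  have bound := succ_mul_secondDiff_le
    (fun k => dotProduct_nonneg_of_nonneg hpi fun x => sq_nonneg ((P ^ k *ᵥ f) x))
    norms_antitone secondDiff_antitone k
  rwa [pow_zero, one_mulVec] at bound

theorem dotProduct_abs_ave_sub_le (hrev : IsReversible P pi) (hP : IsStochastic P)
    (hpi : IsProbVec pi) (hf : f ∈ Set.Icc 0 1) (k : ℕ) :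
    pi ⬝ᵥ |(P ^ (k + 1) * lazyM P) *ᵥ f - (P ^ k * lazyM P) *ᵥ f| ≤ 1 / ((k : ℝ) + 1) := by
  set d := P ^ (k + 2) *ᵥ f - P ^ k *ᵥ f
  have increment : (P ^ (k + 1) * lazyM P) *ᵥ f - (P ^ k * lazyM P) *ᵥ f = (2 : ℝ)⁻¹ • d := by
    simp only [d, ← sub_mulVec, ← smul_mulVec]
    rw [lazyM, Matrix.mul_smul, Matrix.mul_smul, ← smul_sub, mul_add, mul_add, mul_one,
      mul_one, ← pow_succ, ← pow_succ, add_sub_add_comm, add_comm, sub_add_sub_cancel]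
  have hf_sq : pi ⬝ᵥ f ^ 2 ≤ 1 :=
    (hpi.dotProduct_mem_Icc ⟨fun x => sq_nonneg (f x),
      fun x => pow_le_one₀ (hf.1 x) (hf.2 x)⟩).2
  have decay := hrev.succ_mul_dotProduct_sq_sub_le hP hpi.1 f k
  have l1_le_l2 : (pi ⬝ᵥ |d|) ^ 2 ≤ pi ⬝ᵥ d ^ 2 := by
    simpa only [Pi.pow_def, Pi.abs_apply, sq_abs] using hpi.sq_dotProduct_le |d|
  have l1_sq_le : (((k : ℝ) + 1) * pi ⬝ᵥ |d|) ^ 2 ≤ 2 := by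
    have k_sq_le : ((k : ℝ) + 1) ^ 2 ≤ (k + 1) * (k + 2) := by nlinarith [k.cast_nonneg (α := ℝ)]
    calc (((k : ℝ) + 1) * pi ⬝ᵥ |d|) ^ 2 = (k + 1) ^ 2 * (pi ⬝ᵥ |d|) ^ 2 := mul_pow _ _ 2
      _ ≤ (k + 1) * (k + 2) * pi ⬝ᵥ d ^ 2 := by gcongr
      _ ≤ 2 := by linarith
  have abs_half : |(2 : ℝ)⁻¹ • d| = (2 : ℝ)⁻¹ • |d| := by
    ext x
    simp [abs_mul]
  rw [increment, abs_half, dotProduct_smul, smul_eq_mul, le_div_iff₀ (by positivity)]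
  nlinarith

theorem dotProduct_windowMax_ave_le (hrev : IsReversible P pi) (hP : IsStochastic P)
    (hpi : IsProbVec pi) (hf : f ∈ Set.Icc 0 1) (a w : ℕ) :
    pi ⬝ᵥ windowMax (fun k => (P ^ k * lazyM P) *ᵥ f) a w ≤ pi ⬝ᵥ f + w / ((a : ℝ) + 1) := by
  have hstat := hrev.vecMul_eq_self hP
  have mean_eq : pi ⬝ᵥ ((P ^ a * lazyM P) *ᵥ f) = pi ⬝ᵥ f := by
    rw [dotProduct_mulVec, ← vecMul_vecMul, vecMul_pow_eq_self hstat, vecMul_lazyM_eq_self hstat]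
  have increment_le : ∀ k ∈ Ico a (a + w),
      pi ⬝ᵥ |(P ^ (k + 1) * lazyM P) *ᵥ f - (P ^ k * lazyM P) *ᵥ f| ≤ 1 / ((a : ℝ) + 1) :=
    fun k hk => (hrev.dotProduct_abs_ave_sub_le hP hpi hf k).trans <| by
      gcongr
      exact (mem_Ico.1 hk).1
  refine (dotProduct_windowMax_le hpi.1 _ a w).trans ?_
  rw [mean_eq]
  gcongr
  calc _ ≤ #(Ico a (a + w)) • (1 / ((a : ℝ) + 1)) := sum_le_card_nsmul _ _ _ increment_le
    _ = w / ((a : ℝ) + 1) := by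
        rw [Nat.card_Ico, Nat.add_sub_cancel_left, nsmul_eq_mul, mul_one_div]

theorem tvDist_ave_le_of_window (hrev : IsReversible P pi) (hP : IsStochastic P)
    (hpi : IsProbVec pi) (hμ : IsProbVec μ) {n s a w : ℕ} {J : ℝ} (hJ : 0 ≤ J)
    (hwindow : ∀ j : ℕ, |(j : ℝ) - n / 2| ≤ J → ∃ k ∈ Icc a (a + w), j + k = s) :
    tvDist (μ ᵥ* (P ^ s * lazyM P)) pi ≤ tvDist (μ ᵥ* lazyM P ^ n) pi + w / ((a : ℝ) + 1) +
      2 * Real.exp (-(2 * J ^ 2 / n)) := by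
  have ave_stochastic : ∀ k, IsStochastic (P ^ k * lazyM P) := fun k => (hP.pow k).mul hP.lazyM
  have ave_prob := hμ.vecMul (ave_stochastic s)
  have lazy_prob := hμ.vecMul (hP.lazyM.pow n)
  refine tvDist_le_of_forall_dotProduct_le (ave_prob.sum_eq_sum hpi) fun f hf => ?_
  set M := windowMax (fun k => (P ^ k * lazyM P) *ᵥ f) a w
  have hM : M ∈ Set.Icc 0 1 := windowMax_mem_Icc (fun k => (ave_stochastic k).mulVec_mem_Icc hf) a w
  have dominated : ∀ j : ℕ, |(j : ℝ) - n / 2| ≤ J →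
      (μ ᵥ* (P ^ s * lazyM P)) ⬝ᵥ f ≤ (μ ᵥ* P ^ j) ⬝ᵥ M := fun j hj => by
    obtain ⟨k, hk, rfl⟩ := hwindow j hj
    rw [pow_add, mul_assoc, ← vecMul_vecMul, ← dotProduct_mulVec]
    exact dotProduct_le_dotProduct_of_nonneg_left
      (le_windowMax (F := fun k => (P ^ k * lazyM P) *ᵥ f) hk) (hμ.vecMul (hP.pow j)).1
  calc (μ ᵥ* (P ^ s * lazyM P)) ⬝ᵥ f
      ≤ (μ ᵥ* lazyM P ^ n) ⬝ᵥ M + 2 * Real.exp (-(2 * J ^ 2 / n)) :=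
        le_dotProduct_lazyM_pow_add hP hμ hM.1 (ave_prob.dotProduct_mem_Icc hf).2 n hJ dominated
    _ ≤ pi ⬝ᵥ M + tvDist (μ ᵥ* lazyM P ^ n) pi + 2 * Real.exp (-(2 * J ^ 2 / n)) := by
        gcongr
        exact dotProduct_le_dotProduct_add_tvDist (lazy_prob.sum_eq_sum hpi) hM
    _ ≤ pi ⬝ᵥ f + w / ((a : ℝ) + 1) + tvDist (μ ᵥ* lazyM P ^ n) pi +
          2 * Real.exp (-(2 * J ^ 2 / n)) := by
        gcongr
        exact hrev.dotProduct_windowMax_ave_le hP hpi hf a w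
    _ = _ := by ring

theorem tvDist_ave_le (hrev : IsReversible P pi) (hP : IsStochastic P) (hpi : IsProbVec pi)
    (hμ : IsProbVec μ) {n s : ℕ} {J : ℝ} (hJ : 0 ≤ J) (hs : n / 2 + J ≤ s) :
    tvDist (μ ᵥ* (P ^ s * lazyM P)) pi ≤ tvDist (μ ᵥ* lazyM P ^ n) pi +
      2 * J / (s - n / 2 - J + 1) + 2 * Real.exp (-(2 * J ^ 2 / n)) := by
  set a := ⌈(s : ℝ) - n / 2 - J⌉₊
  set w := ⌊2 * J⌋₊
  have hwindow : ∀ j : ℕ, |(j : ℝ) - n / 2| ≤ J → ∃ k ∈ Icc a (a + w), j + k = s := by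
    intro j hj
    obtain ⟨hj_lower, hj_upper⟩ := abs_le.1 hj
    have hjs : j ≤ s := by
      rw [← Nat.cast_le (α := ℝ)]
      linarith
    have ha : a ≤ s - j := Nat.ceil_le.2 <| by
      rw [Nat.cast_sub hjs]
      linarith
    have hw : s - j - a ≤ w := Nat.le_floor <| by
      rw [Nat.cast_sub ha, Nat.cast_sub hjs]
      linarith [Nat.le_ceil ((s : ℝ) - n / 2 - J)]
    exact ⟨s - j, mem_Icc.2 ⟨ha, by omega⟩, by omega⟩
  refine (hrev.tvDist_ave_le_of_window hP hpi hμ hJ hwindow).trans ?_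
  have denominator_pos : 0 < (s : ℝ) - n / 2 - J + 1 := by linarith
  gcongr
  · exact Nat.floor_le (by positivity)
  · exact Nat.le_ceil _

end IsReversible

end ReversibleChain

section MainBound

variable {Ω : Type*} [Fintype Ω] [DecidableEq Ω] {P : Matrix Ω Ω ℝ} {μ pi : Ω → ℝ} {α t : ℝ}

theorem one_le_three_mul_rpow_neg (ht : 0 < t) (hsmall : α * Real.log t ≤ 1) :
    1 ≤ 3 * t ^ (-α) := by
  have exp_neg_one_le : Real.exp (-1) ≤ t ^ (-α) := by
    rw [Real.rpow_def_of_pos ht, Real.exp_le_exp]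
    linarith
  calc (1 : ℝ) = Real.exp 1 * Real.exp (-1) := by rw [← Real.exp_add, add_neg_cancel, Real.exp_zero]
    _ ≤ 3 * t ^ (-α) := by
        gcongr
        exact Real.exp_one_lt_three.le

theorem add_mul_sqrt_mul_rpow_le_phiAC (C : ℝ) (ht : 0 < t) (α : ℝ) :
    t + C * (√(t * (α * Real.log t)) * t ^ α) ≤ phiAC α C t := by
  have exponent : t ^ ((1 + 2 * α) / 2) = √t * t ^ α := by
    rw [Real.sqrt_eq_rpow, ← Real.rpow_add ht]
    ring_nf
  unfold phiAC
  gcongr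
  refine le_trans (le_of_eq ?_) (Int.le_ceil _)
  rw [exponent, Real.sqrt_mul ht.le]
  ring

theorem IsReversible.aveDist_phiAC_le_of_one_lt (hrev : IsReversible P pi) (hP : IsStochastic P)
    (hpi : IsProbVec pi) (hμ : IsProbVec μ) (ht : 1 ≤ t) (hlarge : 1 < α * Real.log t) :
    aveDist P pi (phiAC α 3 t) μ ≤ lazyDist P pi (2 * t) μ + 3 * t ^ (-α) := by
  have ht_pos : 0 < t := by linarith
  set J := √(t * (α * Real.log t))
  set n := ⌊2 * t⌋₊
  set s := ⌊phiAC α 3 t⌋₊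
  have hJ : 1 ≤ J := Real.one_le_sqrt.2 (one_le_mul_of_one_le_of_one_le ht hlarge.le)
  have hJ_sq : J ^ 2 = t * (α * Real.log t) := Real.sq_sqrt (by positivity)
  have rpow_eq : t ^ α = Real.exp (α * Real.log t) := by rw [Real.rpow_def_of_pos ht_pos, mul_comm]
  have one_le_rpow : 1 ≤ t ^ α := by
    rw [rpow_eq]
    exact Real.one_le_exp (by linarith)
  have hn : (n : ℝ) ≤ 2 * t := Nat.floor_le (by positivity)
  have hn_pos : 0 < (n : ℝ) := Nat.cast_pos.2 (Nat.floor_pos.2 (by linarith))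
  have hs : t + 3 * (J * t ^ α) < s + 1 :=
    (add_mul_sqrt_mul_rpow_le_phiAC 3 ht_pos α).trans_lt (Nat.lt_floor_add_one _)
  have J_le : J ≤ J * t ^ α := le_mul_of_one_le_right (by positivity) one_le_rpow
  have window_error : 2 * J / (s - n / 2 - J + 1) ≤ t ^ (-α) :=
    calc 2 * J / (s - n / 2 - J + 1) ≤ 2 * J / (2 * (J * t ^ α)) := by
          gcongr
          linarith
      _ = t ^ (-α) := by
          rw [Real.rpow_neg ht_pos.le]
          field_simp
  have tail_error : Real.exp (-(2 * J ^ 2 / n)) ≤ t ^ (-α) := by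
    rw [Real.rpow_neg ht_pos.le, rpow_eq, ← Real.exp_neg, Real.exp_le_exp, neg_le_neg_iff,
      le_div_iff₀ hn_pos, hJ_sq]
    nlinarith
  rw [aveDist_eq_tvDist_pow_mul_lazyM, lazyDist]
  linarith [hrev.tvDist_ave_le hP hpi hμ (by positivity : 0 ≤ J)
    (by linarith : (n : ℝ) / 2 + J ≤ s)]

theorem IsReversible.aveDist_phiAC_le (hrev : IsReversible P pi) (hP : IsStochastic P)
    (hpi : IsProbVec pi) (hμ : IsProbVec μ) (α : ℝ) (ht : 1 ≤ t) :
    aveDist P pi (phiAC α 3 t) μ ≤ lazyDist P pi (2 * t) μ + 3 * t ^ (-α) := by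
  rcases le_or_gt (α * Real.log t) 1 with hsmall | hlarge
  · have ave_le_one : aveDist P pi (phiAC α 3 t) μ ≤ 1 := by
      rw [aveDist_eq_tvDist_pow_mul_lazyM]
      exact tvDist_le_one (hμ.vecMul ((hP.pow _).mul hP.lazyM)) hpi
    have lazy_nonneg : 0 ≤ lazyDist P pi (2 * t) μ := tvDist_nonneg _ _
    linarith [one_le_three_mul_rpow_neg (by linarith) hsmall]
  · exact hrev.aveDist_phiAC_le_of_one_lt hP hpi hμ ht hlarge

end MainBound

theorem ave_dist_le_lazy_dist_general {Ω : Type*} [Fintype Ω] [DecidableEq Ω]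
    {P : Matrix Ω Ω ℝ} {pi : Ω → ℝ} (hP : IsStochastic P) (hpi : IsProbVec pi)
    (hrev : IsReversible P pi) (α : ℝ) {t : ℝ} (ht : 1 ≤ t) :
    (∀ μ : Ω → ℝ, IsProbVec μ →
      aveDist P pi (phiAC α 3 t) μ ≤ lazyDist P pi (2 * t) μ + 3 * t ^ (-α)) ∧
    aveDistMax P pi (phiAC α 3 t) ≤ lazyDistMax P pi (2 * t) + 3 * t ^ (-α) := by
  have from_start : ∀ μ : Ω → ℝ, IsProbVec μ →
      aveDist P pi (phiAC α 3 t) μ ≤ lazyDist P pi (2 * t) μ + 3 * t ^ (-α) :=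
    fun μ hμ => hrev.aveDist_phiAC_le hP hpi hμ α ht
  have := hpi.nonempty
  refine ⟨from_start, ciSup_le fun x => (from_start _ (isProbVec_deltaMass x)).trans ?_⟩
  gcongr
  exact le_ciSup (f := fun x => lazyDist P pi (2 * t) (deltaMass x)) (Set.finite_range _).bddAbove x

/-- **Theorem 1 (eq. (2)) of Hermon–Peres.**
There are absolute constants `C₁, C₂ > 0` such that for every finite irreducible reversible
Markov chain, every initial distribution `μ`, every `0 < α ≤ 1/2` and every `t ≥ 1`,
`d_ave(φ_{α,C₁}(t), μ) ≤ d_L(2t, μ) + C₂ t^{-α}`, and the same holds for the worst-case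
distances. -/
theorem ave_dist_le_lazy_dist :
    ∃ C₁ C₂ : ℝ, 0 < C₁ ∧ 0 < C₂ ∧
      ∀ (Ω : Type) [Fintype Ω] [DecidableEq Ω] [Nonempty Ω]
        (P : Matrix Ω Ω ℝ) (pi : Ω → ℝ), IsRevMC P pi →
        ∀ α t : ℝ, 0 < α → α ≤ 1 / 2 → 1 ≤ t →
          (∀ μ : Ω → ℝ, IsProbVec μ →
            aveDist P pi (phiAC α C₁ t) μ ≤ lazyDist P pi (2 * t) μ + C₂ * t ^ (-α)) ∧
          aveDistMax P pi (phiAC α C₁ t) ≤ lazyDistMax P pi (2 * t) + C₂ * t ^ (-α) := by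
  exact ⟨3, 3, by norm_num, by norm_num, fun Ω _ _ _ P pi h α t _ _ ht =>
    ave_dist_le_lazy_dist_general h.1.1 h.1.2.2.1 h.2 α ht⟩
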